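/- For all x, y ∈ S, if d[l](x,y) = 0 then x = y. -/

import Mathlib

noncomputable section

open Set
open scoped ENNReal

/-- The Euclidean plane `ℝ²` with the Euclidean metric. -/
abbrev E2 : Type := EuclideanSpace ℝ (Fin 2)

/-- Vertices of the fixed closed regular (equilateral) triangle of side length 1. -/
def p0 : E2 := !₂[0, 0]
def p1 : E2 := !₂[1, 0]
def p2 : E2 := !₂[1 / 2, Real.sqrt 3 / 2]

/-- `Dtri` is the fixed closed regular triangle in `ℝ²` with edge length 1. -/
def Dtri : Set E2 := convexHull ℝ {p0, p1, p2}

/-- `V0` is the set of the three vertices of `Dtri`. -/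
def V0 : Set E2 := {p0, p1, p2}

/-- The three closed edges of `Dtri`. -/
def e01 : Set E2 := segment ℝ p0 p1
def e12 : Set E2 := segment ℝ p1 p2
def e02 : Set E2 := segment ℝ p0 p2

/-- `E0` is the set of the three closed edges of `Dtri`. -/
def E0 : Set (Set E2) := {e01, e12, e02}

/-- The open edge `e° = e ∖ V₀`. -/
def eo (e : Set E2) : Set E2 := e \ V0

/-- `Do = D°` is the interior of `Dtri` in `ℝ²`. -/
def Do : Set E2 := interior Dtri

/-- `l : E₀ → ℝ` is positive and satisfies the strict triangle inequalities:
`l e₁ + l e₂ > l e₃` whenever `{e₁, e₂, e₃} = E₀`. -/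
def TriIneq (l : Set E2 → ℝ) : Prop :=
  (∀ e ∈ E0, 0 < l e) ∧
  ∀ e₁ e₂ e₃ : Set E2, ({e₁, e₂, e₃} : Set (Set E2)) = E0 → l e₁ + l e₂ > l e₃

/-- A linear map `f : ℝ² → ℝ²` realizes the edge lengths `l`, i.e. for each `e ∈ E₀`
the segment `f(e)` has Euclidean length `l e`. -/
def Realizes (f : E2 →ₗ[ℝ] E2) (l : Set E2 → ℝ) : Prop :=
  dist (f p0) (f p1) = l e01 ∧ dist (f p1) (f p2) = l e12 ∧ dist (f p0) (f p2) = l e02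

/-- The metric `d[l]` on `Dtri`, defined by `d[l](x,y) = |f x - f y|₂` for a linear map `f`
realizing the edge lengths `l` (this is independent of the choice of `f`). -/
def dD (l : Set E2 → ℝ) (x y : E2) : ℝ :=
  letI := Classical.propDecidable (∃ f : E2 →ₗ[ℝ] E2, Realizes f l)
  if h : ∃ f : E2 →ₗ[ℝ] E2, Realizes f l then dist (h.choose x) (h.choose y) else 0

/-- A triangulation `T = (σᵢ)_{i ∈ I}`, `I = Fin n`, of a topological space `S`:
a finite family of continuous maps `σᵢ : Dtri → S` such that
(a) `σᵢ` is injective on each open edge, (b) `σᵢ` is injective on `D°`,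
(c) `S` is the disjoint union of `⋃ᵢ σᵢ(V₀)`, the sets `σᵢ(D°)`, and the distinct sets
among the `σᵢ(e°)`, and (d) glued edges are identified by a linear homeomorphism. -/
structure Triangulation (S : Type) [TopologicalSpace S] (n : ℕ) where
  σ : Fin n → E2 → S
  continuousOn : ∀ i, ContinuousOn (σ i) Dtri
  inj_edge : ∀ i, ∀ e ∈ E0, InjOn (σ i) (eo e)
  inj_int : ∀ i, InjOn (σ i) Do
  cover : (⋃ i, σ i '' V0) ∪ (⋃ i, σ i '' Do) ∪ (⋃ i, ⋃ e ∈ E0, σ i '' eo e) = univ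
  disj_int : ∀ i j, i ≠ j → Disjoint (σ i '' Do) (σ j '' Do)
  disj_vert_int : ∀ j, Disjoint (⋃ i, σ i '' V0) (σ j '' Do)
  disj_vert_edge : ∀ j, ∀ e ∈ E0, Disjoint (⋃ i, σ i '' V0) (σ j '' eo e)
  disj_int_edge : ∀ i j, ∀ e ∈ E0, Disjoint (σ i '' Do) (σ j '' eo e)
  edge_eq_or_disjoint : ∀ i j, ∀ e ∈ E0, ∀ e' ∈ E0,
    σ i '' eo e = σ j '' eo e' ∨ Disjoint (σ i '' eo e) (σ j '' eo e')
  glue : ∀ i j, ∀ e ∈ E0, ∀ e' ∈ E0, σ i '' eo e = σ j '' eo e' →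
    ∃ A : E2 →ᵃ[ℝ] E2, A '' e = e' ∧ ∀ x ∈ e, σ j (A x) = σ i x

variable {S : Type} [TopologicalSpace S] {n : ℕ}

/-- `l ∈ ℝ^{E(T)}_Δ`: `l` assigns positive lengths to the edges of `T` satisfying the
strict triangle inequalities in each triangle. -/
def TriIneqT (T : Triangulation S n) (l : Set S → ℝ) : Prop :=
  (∀ (i : Fin n), ∀ e ∈ E0, 0 < l (T.σ i '' e)) ∧
  ∀ (i : Fin n), ∀ e₁ e₂ e₃ : Set E2, ({e₁, e₂, e₃} : Set (Set E2)) = E0 →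
    l (T.σ i '' e₁) + l (T.σ i '' e₂) > l (T.σ i '' e₃)

/-- The restricted edge lengths `l^{(i)}` on the triangle `σᵢ(D)`: `l^{(i)}_e = l_{σᵢ(e)}`. -/
def lRes (T : Triangulation S n) (l : Set S → ℝ) (i : Fin n) : Set E2 → ℝ :=
  fun e => l (T.σ i '' e)

/-- `dᵢ(x,y) = min { d[l^{(i)}](x',y') : x' ∈ σᵢ⁻¹(x), y' ∈ σᵢ⁻¹(y) }` for `x, y ∈ σᵢ(D)`. -/
def dTri (T : Triangulation S n) (l : Set S → ℝ) (i : Fin n) (x y : S) : ℝ :=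
  sInf { r | ∃ x' ∈ Dtri, ∃ y' ∈ Dtri,
    T.σ i x' = x ∧ T.σ i y' = y ∧ r = dD (lRes T l i) x' y' }

/-- The set of sums `Σ_j d_{i_j}(x_{j-1}, x_j)` over chains from `x` to `y`. -/
def chainSums (T : Triangulation S n) (l : Set S → ℝ) (x y : S) : Set ℝ :=
  { r | ∃ (k : ℕ) (c : ℕ → S) (idx : ℕ → Fin n),
      c 0 = x ∧ c k = y ∧
      (∀ j < k, c j ∈ T.σ (idx j) '' Dtri ∧ c (j + 1) ∈ T.σ (idx j) '' Dtri) ∧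
      r = ∑ j ∈ Finset.range k, dTri T l (idx j) (c j) (c (j + 1)) }

/-- The glued metric `d[l]` on `S`. -/
def dGlue (T : Triangulation S n) (l : Set S → ℝ) (x y : S) : ℝ :=
  sInf (chainSums T l x y)


open Filter Topology

section helpers

lemma mem_Dtri_iff (x : E2) : x ∈ Dtri ↔
    ∃ a b c : ℝ, 0 ≤ a ∧ 0 ≤ b ∧ 0 ≤ c ∧ a + b + c = 1 ∧ a • p0 + b • p1 + c • p2 = x := by
  unfold Dtri
  rw [convexHull_insert (by simp), convexHull_pair]
  simp only [convexJoin_singleton_left, Set.mem_iUnion, exists_prop]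
  constructor
  · rintro ⟨y, ⟨s, t, hs, ht, hst, rfl⟩, ⟨u, v, hu, hv, huv, rfl⟩⟩
    refine ⟨u, v * s, v * t, hu, by positivity, by positivity, ?_, ?_⟩
    · rw [add_assoc, ← mul_add, hst, mul_one, huv]
    · simp only [smul_add, smul_smul, add_assoc]
  · rintro ⟨a, b, c, ha, hb, hc, h, rfl⟩
    by_cases hz : b + c = 0
    · have hb0 : b = 0 := by linarith
      have hc0 : c = 0 := by linarith
      have ha0 : a = 1 := by linarith
      subst hb0 hc0 ha0
      exact ⟨p1, left_mem_segment _ _ _, by simpa using left_mem_segment ℝ p0 p1⟩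
    · have hp : 0 < b + c := lt_of_le_of_ne (by positivity) (Ne.symm hz)
      refine ⟨(b / (b+c)) • p1 + (c/(b+c)) • p2, ⟨_, _, by positivity, by positivity, by field_simp, rfl⟩,
        ⟨a, b + c, ha, hp.le, by linarith, ?_⟩⟩
      simp only [smul_add, smul_smul, add_assoc]
      congr <;> field_simp

lemma edge_sub (e : Set E2) (he : e ∈ E0) : e ⊆ Dtri := by
  have h0 : p0 ∈ Dtri := subset_convexHull ℝ _ (by simp)
  have h1 : p1 ∈ Dtri := subset_convexHull ℝ _ (by simp)
  have h2 : p2 ∈ Dtri := subset_convexHull ℝ _ (by simp)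
  have hc : Convex ℝ Dtri := convex_convexHull ℝ _
  rcases he with rfl | rfl | rfl
  · exact hc.segment_subset h0 h1
  · exact hc.segment_subset h1 h2
  · exact hc.segment_subset h0 h2

lemma V0_sub : V0 ⊆ Dtri := subset_convexHull ℝ _

lemma Do_sub : Do ⊆ Dtri := interior_subset

lemma sqrt3_pos : (0:ℝ) < Real.sqrt 3 := by positivity

lemma open_sub : {x : E2 | 0 < x 1 ∧ 0 < x 0 - x 1 / Real.sqrt 3 ∧ 0 < 1 - x 0 - x 1 / Real.sqrt 3} ⊆ Do := by
  apply interior_maximal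
  · rintro x ⟨h1, h2, h3⟩
    rw [mem_Dtri_iff]
    have h := sqrt3_pos
    refine ⟨1 - x 0 - x 1 / Real.sqrt 3, x 0 - x 1 / Real.sqrt 3, 2 * x 1 / Real.sqrt 3, h3.le, h2.le, by positivity, by ring, ?_⟩
    ext i
    fin_cases i
    · simp [p0, p1, p2]; ring
    · simp [p0, p1, p2]; field_simp
  · have c0 : Continuous fun x : E2 => x 0 := by fun_prop
    have c1 : Continuous fun x : E2 => x 1 := by fun_prop
    have c2 : Continuous fun x : E2 => x 0 - x 1 / Real.sqrt 3 := by fun_prop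
    have c3 : Continuous fun x : E2 => 1 - x 0 - x 1 / Real.sqrt 3 := by fun_prop
    exact (isOpen_lt continuous_const c1).inter
      ((isOpen_lt continuous_const c2).inter (isOpen_lt continuous_const c3))

lemma Dtri_cases {x : E2} (hx : x ∈ Dtri) : x ∈ V0 ∨ x ∈ Do ∨ ∃ e ∈ E0, x ∈ eo e := by
  by_cases hV : x ∈ V0
  · exact Or.inl hV
  right
  have key : x ∈ Do ∨ ∃ e ∈ E0, x ∈ e := by
    obtain ⟨a, b, c, ha, hb, hc, h, hx⟩ := (mem_Dtri_iff x).1 hx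
    rcases ha.eq_or_lt with rfl | ha
    · right
      exact ⟨e12, by simp [E0], b, c, hb, hc, by linarith, by simpa using hx⟩
    rcases hb.eq_or_lt with rfl | hb
    · right
      exact ⟨e02, by simp [E0], a, c, ha.le, hc, by linarith, by simpa using hx⟩
    rcases hc.eq_or_lt with rfl | hc
    · right
      exact ⟨e01, by simp [E0], a, b, ha.le, hb.le, by linarith, by simpa using hx⟩
    left
    apply open_sub
    have h := sqrt3_pos
    subst hx
    simp only [p0, p1, p2, Set.mem_ofPred_eq]
    simp
    have e : c * (Real.sqrt 3 / 2) / Real.sqrt 3 = c / 2 := by field_simp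
    rw [e]
    refine ⟨by positivity, by linarith, by linarith⟩
  rcases key with h | ⟨e, he, h⟩
  · exact Or.inl h
  · exact Or.inr ⟨e, he, h, hV⟩

lemma edge_seg {e : Set E2} (he : e ∈ E0) : ∃ p q : E2, e = segment ℝ p q ∧ dist p q = 1 := by
  have h3 : Real.sqrt 3 ^ 2 = 3 := Real.sq_sqrt (by norm_num)
  rcases he with rfl | rfl | rfl
  · exact ⟨_, _, rfl, by simp [EuclideanSpace.dist_eq, p0, p1, Real.dist_eq]⟩
  · refine ⟨_, _, rfl, ?_⟩
    simp [EuclideanSpace.dist_eq, p1, p2, Real.dist_eq, div_pow, h3]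
    norm_num
  · refine ⟨_, _, rfl, ?_⟩
    simp [EuclideanSpace.dist_eq, p0, p2, Real.dist_eq, div_pow, h3]
    norm_num

lemma seg_dist {p q x y : E2} (hpq : dist p q = 1) (hx : x ∈ segment ℝ p q) (hy : y ∈ segment ℝ p q)
    (A : E2 →ᵃ[ℝ] E2) : dist x y ≤ 1 ∧ dist (A x) (A y) = dist (A p) (A q) * dist x y := by
  rw [segment_eq_image_lineMap] at hx hy
  obtain ⟨s, hs, rfl⟩ := hx
  obtain ⟨t, ht, rfl⟩ := hy
  have hst : dist s t ≤ 1 := by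
    rw [Real.dist_eq, abs_le]; constructor <;> linarith [hs.1, hs.2, ht.1, ht.2]
  simp only [AffineMap.apply_lineMap, dist_lineMap_lineMap, hpq, mul_one]
  exact ⟨hst, mul_comm _ _⟩

lemma edge_isom {e e' : Set E2} (he : e ∈ E0) (he' : e' ∈ E0) (A : E2 →ᵃ[ℝ] E2) (hA : A '' e = e')
    {x y : E2} (hx : x ∈ e) (hy : y ∈ e) : dist (A x) (A y) = dist x y := by
  obtain ⟨p, q, rfl, hpq⟩ := edge_seg he
  obtain ⟨p', q', rfl, hpq'⟩ := edge_seg he'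
  have hK : dist (A p) (A q) = 1 := by
    apply le_antisymm
    · refine (seg_dist hpq' ?_ ?_ (AffineMap.id ℝ E2)).1
      · rw [← hA]; exact mem_image_of_mem _ (left_mem_segment _ _ _)
      · rw [← hA]; exact mem_image_of_mem _ (right_mem_segment _ _ _)
    · have h1 : p' ∈ A '' segment ℝ p q := hA ▸ left_mem_segment _ _ _
      have h2 : q' ∈ A '' segment ℝ p q := hA ▸ right_mem_segment _ _ _
      obtain ⟨a, ha, rfl⟩ := h1
      obtain ⟨b, hb, rfl⟩ := h2
      have h := seg_dist hpq ha hb A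
      rw [hpq'] at h
      calc (1:ℝ) = _ := h.2
        _ ≤ dist (A p) (A q) * 1 := by gcongr; exact h.1
        _ = _ := mul_one _
  rw [(seg_dist hpq hx hy A).2, hK, one_mul]

lemma e_closed {e : Set E2} (he : e ∈ E0) : IsClosed e := by
  obtain ⟨p, q, rfl, -⟩ := edge_seg he
  rw [← convexHull_pair]
  exact Set.Finite.isClosed_convexHull ℝ (Set.toFinite {p, q})

lemma Dtri_compact : IsCompact Dtri := Set.Finite.isCompact_convexHull ℝ (Set.toFinite {p0, p1, p2})

/-- a point far away from the triangle -/
def farPt : E2 := !₂[3, 0]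

lemma far_dist {x : E2} (hx : x ∈ Dtri) : 1 ≤ dist x farPt := by
  obtain ⟨a, b, c, ha, hb, hc, h, rfl⟩ := (mem_Dtri_iff x).1 hx
  have h1 := PiLp.norm_apply_le ((a • p0 + b • p1 + c • p2) - farPt) 0
  rw [dist_eq_norm]
  refine le_trans ?_ h1
  simp [p0, p1, p2, farPt]
  rw [le_abs]; right; linarith

/-! ### The metric on one triangle -/

lemma exists_realizes {l : Set E2 → ℝ} (hl : TriIneq l) : ∃ f : E2 →ₗ[ℝ] E2, Realizes f l := by
  obtain ⟨hpos, htri⟩ := hl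
  have ha := hpos e01 (by simp [E0])
  have hb := hpos e12 (by simp [E0])
  have hc := hpos e02 (by simp [E0])
  have t1 := htri e01 e12 e02 rfl
  have t2 := htri e01 e02 e12 (by rw [E0, Set.pair_comm])
  have t3 := htri e12 e02 e01 (by unfold E0; ext; simp; tauto)
  set a := l e01
  set b := l e12
  set c := l e02
  -- coordinates of third point
  set u : ℝ := (a ^ 2 + c ^ 2 - b ^ 2) / (2 * a) with hu
  have hw : 0 ≤ c ^ 2 - u ^ 2 := by
    have e : c ^ 2 - u ^ 2 = ((a + b + c) * (a + c - b) * (b + c - a) * (a + b - c)) / (2 * a) ^ 2 := by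
      rw [hu]; field_simp; ring
    rw [e]
    have := mul_pos (mul_pos (mul_pos (by positivity : 0 < a + b + c) (by linarith : 0 < a + c - b)) (by linarith : 0 < b + c - a)) (by linarith : 0 < a + b - c)
    positivity
  set w : ℝ := Real.sqrt (c ^ 2 - u ^ 2) with hwdef
  have hw2 : w ^ 2 = c ^ 2 - u ^ 2 := Real.sq_sqrt hw
  have h := sqrt3_pos
  let P : E2 := !₂[a, 0]
  let Q : E2 := !₂[u, w]
  let f : E2 →ₗ[ℝ] E2 :=
    { toFun := fun x => (x 0 - x 1 / Real.sqrt 3) • P + (2 * x 1 / Real.sqrt 3) • Q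
      map_add' := by
        intro x y
        simp only [PiLp.add_apply]
        module
      map_smul' := by
        intro r x
        simp only [PiLp.smul_apply, smul_eq_mul, RingHom.id_apply]
        module }
  have f0 : f p0 = 0 := map_zero f ▸ congrArg f (by ext i; fin_cases i <;> simp [p0])
  have f1 : f p1 = P := by simp [f, p1]
  have f2 : f p2 = Q := by
    simp only [f, p2, LinearMap.coe_mk, AddHom.coe_mk]
    have e1 : (1/2:ℝ) - Real.sqrt 3 / 2 / Real.sqrt 3 = 0 := by field_simp; ring
    have e2 : 2 * (Real.sqrt 3 / 2) / Real.sqrt 3 = 1 := by field_simp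
    simp only [PiLp.toLp_apply, Matrix.cons_val_zero, Matrix.cons_val_one, e1, e2]
    simp
  refine ⟨f, ?_, ?_, ?_⟩
  · rw [f0, f1]
    simp [EuclideanSpace.norm_eq, P, Real.sqrt_sq ha.le]; rfl
  · rw [f1, f2]
    have e : (a - u) ^ 2 + w ^ 2 = b ^ 2 := by
      rw [hw2, hu]; field_simp; ring
    simp [EuclideanSpace.dist_eq, P, Q, Real.dist_eq, e, Real.sqrt_sq hb.le]; rfl
  · rw [f0, f2]
    have e : u ^ 2 + w ^ 2 = c ^ 2 := by rw [hw2]; ring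
    simp [EuclideanSpace.norm_eq, Q, e, Real.sqrt_sq hc.le]; rfl

lemma no_collinear {u v : E2} {k : ℝ} (hv : 0 < ‖v‖) (hu : u = k • v)
    (t1 : ‖u‖ + ‖u - v‖ > ‖v‖) (t2 : ‖u‖ + ‖v‖ > ‖u - v‖) (t3 : ‖u - v‖ + ‖v‖ > ‖u‖) : False := by
  have e : u - v = (k - 1) • v := by rw [hu]; module
  have e1 : ‖u‖ = |k| * ‖v‖ := by rw [hu, norm_smul, Real.norm_eq_abs]
  have e2 : ‖u - v‖ = |k - 1| * ‖v‖ := by rw [e, norm_smul, Real.norm_eq_abs]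
  rw [e1, e2] at t1 t2 t3
  rcases le_total k 0 with h | h
  · rw [abs_of_nonpos h, abs_of_nonpos (by linarith : k - 1 ≤ 0)] at t1 t2 t3
    linarith
  · rcases le_total k 1 with h' | h'
    · rw [abs_of_nonneg h, abs_of_nonpos (by linarith : k - 1 ≤ 0)] at t1 t2 t3
      linarith
    · rw [abs_of_nonneg h, abs_of_nonneg (by linarith : 0 ≤ k - 1)] at t1 t2 t3
      linarith

lemma realizes_inj {l : Set E2 → ℝ} (hl : TriIneq l) {f : E2 →ₗ[ℝ] E2} (hf : Realizes f l) :
    LinearMap.ker f = ⊥ := by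
  obtain ⟨hpos, htri⟩ := hl
  have ha := hpos e01 (by simp [E0])
  have hb := hpos e12 (by simp [E0])
  have hc := hpos e02 (by simp [E0])
  have t1 := htri e01 e12 e02 rfl
  have t2 := htri e01 e02 e12 (by rw [E0, Set.pair_comm])
  have t3 := htri e12 e02 e01 (by unfold E0; ext; simp; tauto)
  obtain ⟨h1, h2, h3⟩ := hf
  have f0 : f p0 = 0 := map_zero f ▸ congrArg f (by ext i; fin_cases i <;> simp [p0])
  rw [f0, dist_zero_left] at h1 h3
  rw [dist_eq_norm] at h2
  rw [← h1, ← h2, ← h3] at t1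
  rw [← h1, ← h2, ← h3] at t2
  rw [← h1, ← h2, ← h3] at t3
  rw [← h3] at hc
  rw [LinearMap.ker_eq_bot']
  intro z hz
  have h := sqrt3_pos
  set s := z 0 - z 1 / Real.sqrt 3 with hs
  set t := 2 * z 1 / Real.sqrt 3 with ht
  have hzz : z = s • p1 + t • p2 := by
    ext i
    fin_cases i
    · simp [p1, p2, s, t]; ring
    · simp [p1, p2, t]; field_simp
  have hst : s • f p1 + t • f p2 = 0 := by
    rw [← map_smul, ← map_smul, ← map_add, ← hzz, hz]
  have hs0 : s = 0 := by
    by_contra hne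
    refine no_collinear (u := f p1) (v := f p2) (k := - t / s) hc ?_ t1 t2 t3
    have := congrArg (fun w => s⁻¹ • w) hst
    simp only [smul_add, smul_smul, inv_mul_cancel₀ hne, one_smul, smul_zero] at this
    rw [eq_neg_of_add_eq_zero_left this, ← neg_smul]
    congr 1; field_simp
  rw [hs0, zero_smul, zero_add, smul_eq_zero] at hst
  have ht0 : t = 0 := by
    rcases hst with h | h
    · exact h
    · rw [h] at hc; simp at hc
  rw [hzz, hs0, ht0]; simp

lemma dD_lower {l : Set E2 → ℝ} (hl : TriIneq l) :
    ∃ C : ℝ, 0 < C ∧ ∀ x y, dist x y ≤ C * dD l x y := by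
  have hex := exists_realizes hl
  obtain ⟨K, hK, hA⟩ := LinearMap.exists_antilipschitzWith _ (realizes_inj hl hex.choose_spec)
  refine ⟨K, hK, fun x y => ?_⟩
  unfold dD
  rw [dif_pos hex]
  exact hA.le_mul_dist x y

/-! ### Connectedness by chains -/

lemma cover_D {S : Type} [TopologicalSpace S] {n : ℕ} (T : Triangulation S n) (x : S) :
    ∃ i, ∃ p ∈ Dtri, T.σ i p = x := by
  have h : x ∈ (univ : Set S) := trivial
  rw [← T.cover] at h
  simp only [mem_union, mem_iUnion, mem_image] at h
  rcases h with (⟨i, p, hp, rfl⟩ | ⟨i, p, hp, rfl⟩) | ⟨i, e, he, p, hp, rfl⟩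
  · exact ⟨i, p, V0_sub hp, rfl⟩
  · exact ⟨i, p, Do_sub hp, rfl⟩
  · exact ⟨i, p, edge_sub e he hp.1, rfl⟩

lemma chain_append {S : Type} [TopologicalSpace S] {n : ℕ} (T : Triangulation S n) (l : Set S → ℝ)
    {x y z : S} (i : Fin n) (h : (chainSums T l x y).Nonempty) (hy : y ∈ T.σ i '' Dtri)
    (hz : z ∈ T.σ i '' Dtri) : (chainSums T l x z).Nonempty := by
  obtain ⟨r, k, c, idx, h0, hk, hc, -⟩ := h
  refine ⟨_, k + 1, fun j => if j ≤ k then c j else z, fun j => if j < k then idx j else i,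
    by simpa using h0, by simp, ?_, rfl⟩
  intro j hj
  rcases Nat.lt_succ_iff_lt_or_eq.1 hj with hj | rfl
  · have h1 : j ≤ k := hj.le
    have h2 : j + 1 ≤ k := hj
    simpa [h1, h2, hj] using hc j hj
  · simp [hk, hy, hz]

lemma chain_nonempty {S : Type} [TopologicalSpace S] [T2Space S] [ConnectedSpace S] {n : ℕ}
    (T : Triangulation S n) (l : Set S → ℝ) (x y : S) : (chainSums T l x y).Nonempty := by
  have hcl : ∀ i, IsClosed (T.σ i '' Dtri) := fun i =>
    (Dtri_compact.image_of_continuousOn (T.continuousOn i)).isClosed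
  have gen : ∀ J : Set (Fin n), IsClosed (⋃ i ∈ J, T.σ i '' Dtri) := fun J =>
    (Set.toFinite J).isClosed_biUnion fun i _ => hcl i
  let C : Set S := {z | (chainSums T l x z).Nonempty}
  have h1 : IsClosed C := by
    convert gen {i | ∃ z ∈ T.σ i '' Dtri, z ∈ C} using 1
    ext z
    simp only [mem_iUnion, exists_prop, mem_ofPred_eq]
    constructor
    · intro hz
      obtain ⟨i, p, hp, rfl⟩ := cover_D T z
      exact ⟨i, ⟨_, mem_image_of_mem _ hp, hz⟩, mem_image_of_mem _ hp⟩
    · rintro ⟨i, ⟨w, hw, hwC⟩, hz⟩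
      exact chain_append T l i hwC hw hz
  have h2 : IsClosed Cᶜ := by
    convert gen {i | ∃ z ∈ T.σ i '' Dtri, z ∉ C} using 1
    ext z
    simp only [mem_iUnion, exists_prop, mem_ofPred_eq]
    constructor
    · intro hz
      obtain ⟨i, p, hp, rfl⟩ := cover_D T z
      exact ⟨i, ⟨_, mem_image_of_mem _ hp, hz⟩, mem_image_of_mem _ hp⟩
    · rintro ⟨i, ⟨w, hw, hwC⟩, hz⟩ hzC
      exact hwC (chain_append T l i hzC hz hw)
  have hx : x ∈ C := by
    obtain ⟨i, -⟩ := cover_D T x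
    exact ⟨_, 0, fun _ => x, fun _ => i, rfl, rfl, by simp, rfl⟩
  have := IsClopen.eq_univ ⟨h1, isClosed_compl_iff.1 h2⟩ ⟨x, hx⟩
  have hy : y ∈ C := this ▸ mem_univ y
  exact hy

/-! ### Separating functions -/

/-- the fibre over `x` in triangle `i` -/
def Fib {S : Type} [TopologicalSpace S] {n : ℕ} (T : Triangulation S n) (x : S) (i : Fin n) :
    Set E2 := {f | f ∈ Dtri ∧ T.σ i f = x}

lemma E0_finite : E0.Finite := Set.toFinite {e01, e12, e02}
lemma V0_finite : V0.Finite := Set.toFinite {p0, p1, p2}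

lemma Fib_finite {S : Type} [TopologicalSpace S] {n : ℕ} (T : Triangulation S n) (x : S)
    (i : Fin n) : (Fib T x i).Finite := by
  have h : Fib T x i ⊆ V0 ∪ ((Fib T x i ∩ Do) ∪ ⋃ e ∈ E0, Fib T x i ∩ eo e) := by
    intro f hf
    rcases Dtri_cases hf.1 with h | h | ⟨e, he, h⟩
    · exact Or.inl h
    · exact Or.inr (Or.inl ⟨hf, h⟩)
    · exact Or.inr (Or.inr (mem_biUnion he ⟨hf, h⟩))
  refine (V0_finite.union (Set.Finite.union ?_ (E0_finite.biUnion fun e he => ?_))).subset h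
  · exact Set.Subsingleton.finite fun a ha b hb => T.inj_int i ha.2 hb.2 (ha.1.2.trans hb.1.2.symm)
  · exact Set.Subsingleton.finite fun a ha b hb =>
      T.inj_edge i e he ha.2 hb.2 (ha.1.2.trans hb.1.2.symm)

lemma exists_radius {S : Type} [TopologicalSpace S] {n : ℕ} (T : Triangulation S n) (x : S) :
    ∃ r : ℝ, 0 < r ∧ r ≤ 1 ∧ (∀ i, ∀ f ∈ Fib T x i,
      (∀ e ∈ E0, f ∉ e → ∀ p ∈ e, r ≤ dist p f) ∧ ∀ v ∈ V0, f ≠ v → r ≤ dist v f) := by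
  have hsm : ∀ a : ℝ, 0 < a → ∀ᶠ r in 𝓝[>] (0:ℝ), r ≤ a := fun a ha =>
    mem_nhdsWithin_of_mem_nhds (Iic_mem_nhds ha)
  have h : ∀ᶠ r in 𝓝[>] (0:ℝ), 0 < r ∧ r ≤ 1 ∧ (∀ i, ∀ f ∈ Fib T x i,
      (∀ e ∈ E0, f ∉ e → ∀ p ∈ e, r ≤ dist p f) ∧ ∀ v ∈ V0, f ≠ v → r ≤ dist v f) := by
    refine (eventually_mem_nhdsWithin).and ((hsm 1 one_pos).and ?_)
    rw [eventually_all]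
    intro i
    rw [eventually_all_finite (Fib_finite T x i)]
    intro f hf
    refine Filter.Eventually.and ?_ ?_
    · rw [eventually_all_finite E0_finite]
      intro e he
      by_cases hfe : f ∈ e
      · exact Eventually.of_forall fun r h => absurd hfe h
      · rcases e.eq_empty_or_nonempty with rfl | hne
        · exact Eventually.of_forall fun r h p hp => hp.elim
        filter_upwards [hsm _ (((e_closed he).notMem_iff_infDist_pos hne).1 hfe)] with r hr _ p hp
        rw [dist_comm]
        exact hr.trans (Metric.infDist_le_dist_of_mem hp)
    · rw [eventually_all_finite V0_finite]
      intro v hv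
      by_cases hfe : f = v
      · exact Eventually.of_forall fun r h => absurd hfe h
      · filter_upwards [hsm _ (dist_pos.2 (Ne.symm hfe))] with r hr _
        exact hr
  exact h.exists

lemma transfer {S : Type} [TopologicalSpace S] {n : ℕ} (T : Triangulation S n) {x : S} {r : ℝ}
    (hr : ∀ i, ∀ f ∈ Fib T x i,
      (∀ e ∈ E0, f ∉ e → ∀ p ∈ e, r ≤ dist p f) ∧ ∀ v ∈ V0, f ≠ v → r ≤ dist v f)
    {i j : Fin n} {p q : E2} (hp : p ∈ Dtri) (hq : q ∈ Dtri) (hpq : T.σ i p = T.σ j q)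
    {f : E2} (hf : f ∈ Fib T x j) (hfr : dist q f < r) :
    ∃ f' ∈ Fib T x i, dist p f' ≤ dist q f := by
  have vint : ∀ {i j : Fin n} {p q : E2}, p ∈ V0 → q ∈ Do → T.σ i p ≠ T.σ j q :=
    fun {i j p q} h1 h2 h => Set.disjoint_left.1 (T.disj_vert_int j)
      (mem_iUnion.2 ⟨i, mem_image_of_mem _ h1⟩) (h ▸ mem_image_of_mem _ h2)
  have vedge : ∀ {i j : Fin n} {p q : E2} {e}, e ∈ E0 → p ∈ V0 → q ∈ eo e → T.σ i p ≠ T.σ j q :=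
    fun {i j p q e} he h1 h2 h => Set.disjoint_left.1 (T.disj_vert_edge j e he)
      (mem_iUnion.2 ⟨i, mem_image_of_mem _ h1⟩) (h ▸ mem_image_of_mem _ h2)
  have iedge : ∀ {i j : Fin n} {p q : E2} {e}, e ∈ E0 → p ∈ Do → q ∈ eo e → T.σ i p ≠ T.σ j q :=
    fun {i j p q e} he h1 h2 h => Set.disjoint_left.1 (T.disj_int_edge i j e he)
      (mem_image_of_mem _ h1) (h ▸ mem_image_of_mem _ h2)
  rcases Dtri_cases hq with hqV | hqI | ⟨e', he', hqE⟩
  · have hfq : f = q := by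
      by_contra hne
      exact absurd ((hr j f hf).2 q hqV hne) (not_le.2 hfr)
    subst hfq
    exact ⟨p, ⟨hp, hpq.trans hf.2⟩, by simp⟩
  · rcases Dtri_cases hp with hpV | hpI | ⟨e, he, hpE⟩
    · exact absurd hpq (vint hpV hqI)
    · have hij : i = j := by
        by_contra hne
        exact Set.disjoint_left.1 (T.disj_int i j hne) (mem_image_of_mem _ hpI)
          (hpq ▸ mem_image_of_mem _ hqI)
      subst hij
      have := T.inj_int i hpI hqI hpq
      subst this
      exact ⟨f, hf, le_rfl⟩
    · exact absurd hpq.symm (iedge he hqI hpE)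
  · rcases Dtri_cases hp with hpV | hpI | ⟨e, he, hpE⟩
    · exact absurd hpq (vedge he' hpV hqE)
    · exact absurd hpq (iedge he' hpI hqE)
    · have heq : T.σ i '' eo e = T.σ j '' eo e' := by
        rcases T.edge_eq_or_disjoint i j e he e' he' with h | h
        · exact h
        · exact (Set.disjoint_left.1 h (mem_image_of_mem _ hpE)
            (hpq ▸ mem_image_of_mem _ hqE)).elim
      obtain ⟨A, hA, hAσ⟩ := T.glue i j e he e' he' heq
      have hApe : A p ∈ e' := hA ▸ mem_image_of_mem _ hpE.1
      have hApo : A p ∈ eo e' := by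
        refine ⟨hApe, fun hV => ?_⟩
        exact vedge he hV hpE (hAσ p hpE.1)
      have hAq : A p = q := T.inj_edge j e' he' hApo hqE ((hAσ p hpE.1).trans hpq)
      have hfe : f ∈ e' := by
        by_contra hne
        exact absurd ((hr j f hf).1 e' he' hne q hqE.1) (not_le.2 hfr)
      rw [← hA] at hfe
      obtain ⟨f', hf', rfl⟩ := hfe
      refine ⟨f', ⟨edge_sub e he hf', (hAσ f' hf').symm.trans hf.2⟩, ?_⟩
      rw [← hAq, edge_isom he he' A hA hpE.1 hf']

/-- truncated distance to the fibre -/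
def Gfun {S : Type} [TopologicalSpace S] {n : ℕ} (T : Triangulation S n) (x : S) (r : ℝ)
    (i : Fin n) (p : E2) : ℝ := min r (Metric.infDist p (insert farPt (Fib T x i)))

lemma G_le {S : Type} [TopologicalSpace S] {n : ℕ} (T : Triangulation S n) {x : S} {r : ℝ}
    (hr1 : r ≤ 1) (hr : ∀ i, ∀ f ∈ Fib T x i,
      (∀ e ∈ E0, f ∉ e → ∀ p ∈ e, r ≤ dist p f) ∧ ∀ v ∈ V0, f ≠ v → r ≤ dist v f)
    {i j : Fin n} {p q : E2} (hp : p ∈ Dtri) (hq : q ∈ Dtri) (hpq : T.σ i p = T.σ j q) :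
    Gfun T x r i p ≤ Gfun T x r j q := by
  by_contra! hlt
  have hlt' : Metric.infDist q (insert farPt (Fib T x j)) < Gfun T x r i p := by
    rcases min_lt_iff.1 hlt with h | h
    · exact absurd (min_le_left _ _ : Gfun T x r i p ≤ r) (not_le.2 h)
    · exact h
  obtain ⟨f, hf, hfd⟩ := (Metric.infDist_lt_iff (insert_nonempty _ _)).1 hlt'
  have hfr : dist q f < r := hfd.trans_le (min_le_left _ _)
  rcases hf with rfl | hf
  · linarith [far_dist hq]
  · obtain ⟨f', hf', hd⟩ := transfer T hr hp hq hpq hf hfr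
    have h1 : Gfun T x r i p ≤ dist p f' :=
      (min_le_right _ _).trans (Metric.infDist_le_dist_of_mem (mem_insert_of_mem _ hf'))
    linarith

lemma G_lip {S : Type} [TopologicalSpace S] {n : ℕ} (T : Triangulation S n) (x : S) (r : ℝ)
    (i : Fin n) (p q : E2) : Gfun T x r i p - Gfun T x r i q ≤ dist p q := by
  have h := Metric.infDist_le_infDist_add_dist (s := insert farPt (Fib T x i)) (x := p) (y := q)
  have hd : 0 ≤ dist p q := dist_nonneg
  rw [sub_le_iff_le_add']
  unfold Gfun
  rcases le_total r (Metric.infDist q (insert farPt (Fib T x i))) with h' | h'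
  · rw [min_eq_left h']; exact (min_le_left _ _).trans (by linarith)
  · rw [min_eq_right h']; exact (min_le_right _ _).trans h

end helpers

/-- for all `x, y ∈ S`, if `d[l](x,y) = 0` then `x = y`. -/
theorem dGlue_eq_zero_imp_eq
    {S : Type} [TopologicalSpace S] [CompactSpace S] [T2Space S] [ConnectedSpace S]
    {n : ℕ} (T : Triangulation S n) (l : Set S → ℝ) (hl : TriIneqT T l) :
    ∀ x y : S, dGlue T l x y = 0 → x = y := by
  intro x y hxy
  obtain ⟨r, hr0, hr1, hr⟩ := exists_radius T x
  have hC : ∀ i, ∃ C : ℝ, 0 < C ∧ ∀ u v, dist u v ≤ C * dD (lRes T l i) u v := fun i =>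
    dD_lower ⟨hl.1 i, hl.2 i⟩
  choose C hC0 hC using hC
  obtain ⟨M, hM⟩ : ∃ M : ℝ, ∀ i, C i ≤ M := by
    obtain ⟨M, hM⟩ := (Set.finite_range C).bddAbove
    exact ⟨M, fun i => hM (mem_range_self i)⟩
  have hM0 : 0 < M := by
    obtain ⟨i, -⟩ := cover_D T x
    exact (hC0 i).trans_le (hM i)
  choose I P hPD hPσ using cover_D T
  let φ : S → ℝ := fun z => Gfun T x r (I z) (P z)
  have hφ : ∀ i, ∀ p ∈ Dtri, φ (T.σ i p) = Gfun T x r i p := fun i p hp =>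
    le_antisymm (G_le T hr1 hr (hPD _) hp (hPσ _)) (G_le T hr1 hr hp (hPD _) (hPσ _).symm)
  have step : ∀ i u v, u ∈ T.σ i '' Dtri → v ∈ T.σ i '' Dtri →
      (φ v - φ u) / M ≤ dTri T l i u v := by
    rintro i _ _ ⟨a, ha, rfl⟩ ⟨b, hb, rfl⟩
    refine le_csInf ⟨_, a, ha, b, hb, rfl, rfl, rfl⟩ ?_
    rintro _ ⟨a', ha', b', hb', h1, h2, rfl⟩
    rw [← h1, ← h2, hφ i a' ha', hφ i b' hb', div_le_iff₀ hM0]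
    have h3 := G_lip T x r i b' a'
    have h4 := hC i a' b'
    have h5 : 0 ≤ dD (lRes T l i) a' b' := by
      by_contra! hneg
      have := mul_neg_of_pos_of_neg (hC0 i) hneg
      linarith [dist_nonneg (x := a') (y := b')]
    rw [dist_comm] at h3
    nlinarith [mul_le_mul_of_nonneg_right (hM i) h5]
  have low : (φ y - φ x) / M ≤ dGlue T l x y := by
    refine le_csInf (chain_nonempty T l x y) ?_
    rintro _ ⟨k, c, idx, rfl, rfl, hc, rfl⟩
    rw [← Finset.sum_range_sub (fun j => φ (c j)) k, Finset.sum_div]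
    refine Finset.sum_le_sum fun j hj => ?_
    have := hc j (Finset.mem_range.1 hj)
    exact step _ _ _ this.1 this.2
  rw [hxy, div_le_iff₀ hM0, zero_mul] at low
  have hx0 : φ x = 0 := by
    have : Metric.infDist (P x) (insert farPt (Fib T x (I x))) = 0 :=
      Metric.infDist_zero_of_mem (mem_insert_of_mem _ ⟨hPD x, hPσ x⟩)
    simp only [φ, Gfun, this]
    exact min_eq_right hr0.le
  have hy0 : Metric.infDist (P y) (insert farPt (Fib T x (I y))) ≤ 0 := by
    have h : min r (Metric.infDist (P y) (insert farPt (Fib T x (I y)))) ≤ 0 := by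
      change φ y ≤ 0
      linarith
    rcases min_le_iff.1 h with h | h
    · linarith
    · exact h
  have hcl : IsClosed (insert farPt (Fib T x (I y))) := ((Fib_finite T x (I y)).insert _).isClosed
  have hmem := (hcl.mem_iff_infDist_zero (insert_nonempty _ _)).2
    (le_antisymm hy0 Metric.infDist_nonneg)
  rcases hmem with h | h
  · have := far_dist (hPD y)
    rw [h, dist_self] at this
    linarith
  · rw [← hPσ y, h.2]
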